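/- Let A be a Cohen-Macaulay Noetherian local ring and R a finite A-module with a minimal free resolution 0 → F₂ →ψ F₁ →φ F₀ →p R → 0 of length 2. Let φ' be the matrix φ with its first row erased, and let I' be the zeroth Fitting ideal (ideal of maximal minors) of φ'. Assume depth(Ann_A R, A) = 2 and depth(I', A) ≥ 4. Set A_Y := A/Ann_A R and C := Hom_{A_Y}(R, A_Y) (the conductor of R into A_Y). Then there is an A_Y-module isomorphism R ≅ Hom_{A_Y}(C, C); transporting composition of endomorphisms of C along this isomorphism endows R with a commutative A-algebra structure whose identity element is the image under p of the generator of F₀ corresponding to the first row of φ. -/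

import Mathlib

open Matrix IsLocalRing

/-- `depthGE A I M n`: there is an `M`-regular sequence of length `n` consisting of
elements of the ideal `I`. -/
def depthGE (A : Type) [CommRing A] (I : Ideal A) (M : Type) [AddCommGroup M] [Module A M]
    (n : ℕ) : Prop :=
  ∃ rs : List A, rs.length = n ∧ (∀ x ∈ rs, x ∈ I) ∧ RingTheory.Sequence.IsRegular M rs

/-- `depthEq A I M n`: the length of a maximal `M`-regular sequence inside `I` is `n`. -/
def depthEq (A : Type) [CommRing A] (I : Ideal A) (M : Type) [AddCommGroup M] [Module A M]
    (n : ℕ) : Prop :=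
  depthGE A I M n ∧ ¬ depthGE A I M (n + 1)

/-- A Noetherian local ring is Cohen-Macaulay if its depth equals its Krull dimension. -/
def IsCMLocalRing (A : Type) [CommRing A] [IsLocalRing A] : Prop :=
  ∃ rs : List A, (∀ x ∈ rs, x ∈ maximalIdeal A) ∧ RingTheory.Sequence.IsRegular A rs ∧
    (rs.length : WithBot ℕ∞) = ringKrullDim A

/-- `0 → A^{ι₂} →ψ A^{ι₁} →φ A^{ι₀} →p R → 0` is exact. -/
def IsFreeRes₂ (A : Type) [CommRing A] {R : Type} [AddCommGroup R] [Module A R]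
    {ι₀ ι₁ ι₂ : Type} [Fintype ι₀] [Fintype ι₁] [Fintype ι₂]
    (φ : Matrix ι₀ ι₁ A) (ψ : Matrix ι₁ ι₂ A) (p : (ι₀ → A) →ₗ[A] R) : Prop :=
  Function.Surjective p ∧ LinearMap.ker p = LinearMap.range φ.mulVecLin ∧
    LinearMap.ker φ.mulVecLin = LinearMap.range ψ.mulVecLin ∧
    LinearMap.ker ψ.mulVecLin = ⊥

/-- The ideal of maximal minors (zeroth Fitting ideal) of a matrix with `m` rows. -/
def maxMinors (A : Type) [CommRing A] {m : ℕ} {J : Type} [Fintype J] [DecidableEq J]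
    (M : Matrix (Fin m) J A) : Ideal A :=
  Ideal.span {x | ∃ c : Fin m → J, Function.Injective c ∧ x = (M.submatrix id c).det}

/-!
Rees' theorem turns `depth(I', A) ≥ 4` into the vanishing of `Extⁱ(Q, A)` for `i < 4` and all `Q`
killed by `I'`.  Shifting along the resolution leaves `Hom(Q, R) = Ext¹(Q, R) = 0`: maps into `R`
are determined by their restriction to any submodule containing the `I'`-multiples, and every map
on such a submodule extends.

By Cramer's rule `I'` kills `R / Ae`, where `e` is the image of the first generator.  Hence
`A / Ann R` is the cyclic submodule `Ae`, and evaluation at `e` identifies `End R` with `R`;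
moreover `a • f` is a scalar for `a ∈ I'` and `f ∈ End R`, which makes `End R` commutative.
Evaluation at `e` also embeds `C` in `R` as a submodule containing the `I'`-multiples, so
endomorphisms of `C` extend uniquely to endomorphisms of `R`.
-/

universe u v w

section ExtVanishing

open CategoryTheory Abelian RingTheory.Sequence

/-- Cohomological form of `depth(I, M) ≥ n`: the groups `Extⁱ(Q, M)`, `i < n`, vanish for every
module `Q` killed by `I`.  Unlike regular sequences this can be shifted along exact sequences.  The
modules `Q` live in the universe of `M`. -/
def ExtVanishesBelow {A : Type u} [CommRing A] [Small.{v} A] (I : Ideal A) (M : Type v)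
    [AddCommGroup M] [Module A M] (n : ℕ) : Prop :=
  ∀ Q : ModuleCat.{v} A, I ≤ Module.annihilator A Q → ∀ i < n,
    Subsingleton (Ext.{v} Q (ModuleCat.of A M) i)

namespace ExtVanishesBelow

variable {A : Type u} [CommRing A] [Small.{v} A] {I : Ideal A}
  {M : Type v} [AddCommGroup M] [Module A M]

theorem mono {m n : ℕ} (hmn : m ≤ n) (h : ExtVanishesBelow I M n) : ExtVanishesBelow I M m :=
  fun Q hQ i hi => h Q hQ i (hi.trans_le hmn)

theorem of_isWeaklyRegular {rs : List A} (hI : ∀ a ∈ rs, a ∈ I) (hrs : IsWeaklyRegular M rs) :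
    ExtVanishesBelow I M rs.length := by
  induction rs generalizing M with
  | nil => exact fun _ _ i hi => absurd hi i.not_lt_zero
  | cons a rs ih =>
    intro Q hQ i hi
    obtain ⟨ha, hI⟩ := List.forall_mem_cons.mp hI
    obtain ⟨hreg, hrs⟩ := (isWeaklyRegular_cons_iff M a rs).mp hrs
    cases i with
    | zero =>
      have : Subsingleton (Q →ₗ[A] M) := hreg.linearMap_subsingleton_of_mem_annihilator (hQ ha)
      exact (Ext.addEquiv₀.trans ModuleCat.homAddEquiv).subsingleton
    | succ i =>
      -- multiplication by `a` on `Extⁱ⁺¹(Q, M)` is injective because `Extⁱ(Q, M / aM) = 0`,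
      -- and it is zero because `a` kills `Q`
      refine subsingleton_of_forall_eq 0 fun x => ?_
      have hax : x.comp (Ext.mk₀ ((ModuleCat.of A M).smulShortComplex a).f) (add_zero _) = 0 :=
        congrArg (fun f => f.hom x)
          (Ext.postcomp_smul_id_eq_zero_of_mem_annihilator (M := ModuleCat.of A M) (hQ ha) (i + 1))
      obtain ⟨y, rfl⟩ := Ext.covariant_sequence_exact₁ Q
        (IsSMulRegular.smulShortComplex_shortExact (M := ModuleCat.of A M) hreg) x hax rfl
      have hy : y = 0 := (ih hI hrs Q hQ i (Nat.lt_of_succ_lt_succ hi)).elim _ _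
      rw [hy, Ext.zero_comp]
      rfl

theorem of_isWeaklyRegular_of_flat [Module.Flat A M] {rs : List A} (hI : ∀ a ∈ rs, a ∈ I)
    (hrs : IsWeaklyRegular A rs) : ExtVanishesBelow I M rs.length :=
  of_isWeaklyRegular hI <|
    ((TensorProduct.rid A M).isWeaklyRegular_congr rs).mp hrs.isWeaklyRegular_lTensor

theorem of_shortExact {X Y : Type v} [AddCommGroup X] [Module A X] [AddCommGroup Y] [Module A Y]
    {f : X →ₗ[A] Y} {g : Y →ₗ[A] M} (hf : Function.Injective f) (hfg : Function.Exact f g)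
    (hg : Function.Surjective g) {n : ℕ} (hX : ExtVanishesBelow I X (n + 1))
    (hY : ExtVanishesBelow I Y n) : ExtVanishesBelow I M n := by
  intro Q hQ i hi
  have hS := ModuleCat.shortComplex_shortExact
    (ModuleCat.shortComplexOfCompEqZero f g hfg.linearMap_comp_eq_zero) hfg hf hg
  refine subsingleton_of_forall_eq 0 fun x => ?_
  obtain ⟨y, rfl⟩ := Ext.covariant_sequence_exact₃ Q hS x rfl
    ((hX Q hQ (i + 1) (Nat.succ_lt_succ hi)).elim _ _)
  have hy : y = 0 := (hY Q hQ i hi).elim _ _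
  rw [hy, Ext.zero_comp]

theorem of_resolution {F₀ F₁ F₂ : Type v} [AddCommGroup F₀] [Module A F₀] [AddCommGroup F₁]
    [Module A F₁] [AddCommGroup F₂] [Module A F₂] {d₂ : F₂ →ₗ[A] F₁} {d₁ : F₁ →ₗ[A] F₀}
    {d₀ : F₀ →ₗ[A] M} (h₂ : Function.Injective d₂) (h₂₁ : Function.Exact d₂ d₁)
    (h₁₀ : Function.Exact d₁ d₀) (h₀ : Function.Surjective d₀) {n : ℕ}
    (hF₂ : ExtVanishesBelow I F₂ (n + 2)) (hF₁ : ExtVanishesBelow I F₁ (n + 1))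
    (hF₀ : ExtVanishesBelow I F₀ n) : ExtVanishesBelow I M n := by
  have hd₁ : Function.Exact d₂ d₁.rangeRestrict :=
    LinearMap.exact_iff.mpr (d₁.ker_rangeRestrict.trans h₂₁.linearMap_ker_eq)
  have hd₀ : Function.Exact d₁.range.subtype d₀ :=
    LinearMap.exact_iff.mpr (h₁₀.linearMap_ker_eq.trans d₁.range.range_subtype.symm)
  have hrange : ExtVanishesBelow I d₁.range (n + 1) :=
    of_shortExact h₂ hd₁ d₁.surjective_rangeRestrict hF₂ hF₁
  exact of_shortExact d₁.range.injective_subtype hd₀ h₀ hrange hF₀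

theorem torsionBySet_eq_bot (h : ExtVanishesBelow I M 1) :
    Submodule.torsionBySet A M (I : Set A) = ⊥ := by
  have hQ : I ≤ Module.annihilator A (Submodule.torsionBySet A M (I : Set A)) := fun a ha =>
    Module.mem_annihilator.mpr fun x =>
      Subtype.ext ((Submodule.mem_torsionBySet_iff _ _).mp x.2 ⟨a, ha⟩)
  have := h (ModuleCat.of A _) hQ 0 one_pos
  have hsub : Subsingleton (Submodule.torsionBySet A M (I : Set A) →ₗ[A] M) :=
    (Ext.addEquiv₀.trans (ModuleCat.homAddEquiv (M := .of A _) (N := .of A M))).symm.subsingleton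
  have hzero : (Submodule.torsionBySet A M (I : Set A)).subtype = 0 := hsub.elim _ _
  rw [← Submodule.range_subtype (Submodule.torsionBySet A M (I : Set A)), hzero,
    LinearMap.range_zero]

theorem exists_extend (h : ExtVanishesBelow I M 2) {L : Type v} [AddCommGroup L] [Module A L]
    {N : Type w} [AddCommGroup N] [Module A N] {j : N →ₗ[A] L} (hj : Function.Injective j)
    (hI : I • (⊤ : Submodule A L) ≤ j.range) (f : N →ₗ[A] M) :
    ∃ g : L →ₗ[A] M, g ∘ₗ j = f := by
  have hexact : Function.Exact j.range.subtype j.range.mkQ :=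
    LinearMap.exact_subtype_mkQ j.range
  have hS := ModuleCat.shortComplex_shortExact
    (ModuleCat.shortComplexOfCompEqZero _ _ hexact.linearMap_comp_eq_zero)
    hexact j.range.injective_subtype j.range.mkQ_surjective
  have hQ : I ≤ Module.annihilator A (L ⧸ j.range) := by
    rw [Submodule.annihilator_quotient]
    exact fun a ha => Submodule.mem_colon.mpr fun l _ =>
      hI (Submodule.smul_mem_smul ha Submodule.mem_top)
  let f' : j.range →ₗ[A] M := f ∘ₗ (LinearEquiv.ofInjective j hj).symm
  obtain ⟨x, hx⟩ := Ext.contravariant_sequence_exact₁ hS (ModuleCat.of A M)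
    (Ext.mk₀ (ModuleCat.ofHom f')) rfl ((h (ModuleCat.of A _) hQ 1 one_lt_two).elim _ _)
  obtain ⟨g, rfl⟩ := (Ext.mk₀_bijective _ _).2 x
  rw [Ext.mk₀_comp_mk₀] at hx
  have hg : g.hom ∘ₗ j.range.subtype = f' :=
    congrArg ModuleCat.Hom.hom ((Ext.mk₀_bijective _ _).1 hx)
  refine ⟨g.hom, LinearMap.ext fun n => ?_⟩
  have hn := LinearMap.congr_fun hg (LinearEquiv.ofInjective j hj n)
  simpa [f'] using hn

end ExtVanishesBelow

end ExtVanishing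

section CyclicUpToTorsion

variable {A : Type u} [CommRing A] {I : Ideal A} {M : Type v} [AddCommGroup M] [Module A M] {e : M}

theorem linearMap_eq_of_smul_top_le_eqLocus {N : Type w} [AddCommGroup N] [Module A N]
    (hN : Submodule.torsionBySet A N (I : Set A) = ⊥) {f g : M →ₗ[A] N}
    (hfg : I • (⊤ : Submodule A M) ≤ LinearMap.eqLocus f g) : f = g := by
  ext x
  rw [← sub_eq_zero, ← Submodule.mem_bot A, ← hN, Submodule.mem_torsionBySet_iff]
  rintro ⟨a, ha⟩
  rw [smul_sub, ← map_smul, ← map_smul, sub_eq_zero]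
  exact hfg (Submodule.smul_mem_smul ha Submodule.mem_top)

theorem linearMap_eq_of_apply_eq {N : Type w} [AddCommGroup N] [Module A N]
    (hN : Submodule.torsionBySet A N (I : Set A) = ⊥)
    (he : I • (⊤ : Submodule A M) ≤ Submodule.span A {e}) {f g : M →ₗ[A] N} (hfg : f e = g e) :
    f = g :=
  linearMap_eq_of_smul_top_le_eqLocus hN <| he.trans <|
    (Submodule.span_singleton_le_iff_mem _ _).mpr hfg

theorem annihilator_eq_torsionOf (hM : Submodule.torsionBySet A M (I : Set A) = ⊥)
    (he : I • (⊤ : Submodule A M) ≤ Submodule.span A {e}) :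
    Module.annihilator A M = Ideal.torsionOf A M e := by
  refine le_antisymm (fun c hc => Module.mem_annihilator.mp hc e) fun c hc => ?_
  rw [Module.mem_annihilator_iff_lsmul_eq_zero]
  exact linearMap_eq_of_apply_eq hM he hc

theorem exists_quotient_annihilator_embedding
    (hM : Submodule.torsionBySet A M (I : Set A) = ⊥)
    (he : I • (⊤ : Submodule A M) ≤ Submodule.span A {e}) :
    ∃ ι : (A ⧸ Module.annihilator A M) →ₗ[A] M,
      Function.Injective ι ∧ ι.range = Submodule.span A {e} := by
  let E : (A ⧸ Module.annihilator A M) ≃ₗ[A] Submodule.span A {e} :=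
    Submodule.quotEquivOfEq _ _ (annihilator_eq_torsionOf hM he) ≪≫ₗ
      Ideal.quotTorsionOfEquivSpanSingleton A M e
  refine ⟨(Submodule.span A {e}).subtype ∘ₗ E,
    (Submodule.injective_subtype _).comp E.injective, ?_⟩
  rw [LinearEquiv.range_comp, Submodule.range_subtype]

theorem commute_end (hM : Submodule.torsionBySet A M (I : Set A) = ⊥)
    (he : I • (⊤ : Submodule A M) ≤ Submodule.span A {e}) (f g : Module.End A M) :
    Commute f g := by
  rw [commute_iff_eq, ← sub_eq_zero]
  refine LinearMap.ext fun x => ?_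
  rw [LinearMap.zero_apply, ← Submodule.mem_bot A, ← hM, Submodule.mem_torsionBySet_iff]
  rintro ⟨a, ha⟩
  obtain ⟨c, hc⟩ := Submodule.mem_span_singleton.mp
    (he (Submodule.smul_mem_smul ha (Submodule.mem_top (x := f e))))
  have hscalar : a • f = c • 1 := linearMap_eq_of_apply_eq hM he hc.symm
  have hcomm : a • (f * g - g * f) = 0 := by
    rw [smul_sub, ← smul_mul_assoc, ← mul_smul_comm, hscalar, smul_one_mul, mul_smul_one, sub_self]
  exact LinearMap.congr_fun hcomm x

theorem bijective_end_apply [Small.{v} A] (hM : ExtVanishesBelow I M 2)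
    (he : I • (⊤ : Submodule A M) ≤ Submodule.span A {e}) :
    Function.Bijective (LinearMap.applyₗ e : Module.End A M →ₗ[A] M) := by
  have htors := (hM.mono one_le_two).torsionBySet_eq_bot
  refine ⟨fun f g hfg => linearMap_eq_of_apply_eq htors he hfg, fun x => ?_⟩
  have hx : ∀ c : A, c • e = 0 → c • x = 0 := fun c hc =>
    Module.mem_annihilator.mp ((annihilator_eq_torsionOf htors he).ge hc) x
  let s : Submodule.span A {e} →ₗ[A] M :=
    (LinearPMap.mkSpanSingleton' (σ := RingHom.id A) e x hx).toFun
  have hs : s ⟨e, Submodule.mem_span_singleton_self e⟩ = x := by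
    have hgen := LinearPMap.mkSpanSingleton'_apply (σ := RingHom.id A) e x hx 1
      (Submodule.smul_mem _ _ (Submodule.mem_span_singleton_self e))
    simp only [one_smul, RingHom.id_apply] at hgen
    exact hgen
  obtain ⟨g, hg⟩ := hM.exists_extend (Submodule.injective_subtype (Submodule.span A {e}))
    (he.trans (Submodule.range_subtype _).ge) s
  exact ⟨g, (LinearMap.congr_fun hg ⟨e, Submodule.mem_span_singleton_self e⟩).trans hs⟩

theorem exists_comp_eq_smul_id {B : Type w} [AddCommGroup B] [Module A B] {ι : B →ₗ[A] M}
    (hι : Function.Injective ι) (hI : I • (⊤ : Submodule A M) ≤ ι.range) {a : A} (ha : a ∈ I) :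
    ∃ f : M →ₗ[A] B, ι ∘ₗ f = a • LinearMap.id :=
  ⟨_, LinearMap.codRestrictOfInjective_comp (a • LinearMap.id) ι hι fun _ =>
    hI (Submodule.smul_mem_smul ha Submodule.mem_top)⟩

/-- The action of endomorphisms of `M` on `Hom(M, B)` by precomposition. -/
def precompEnd (A : Type u) [CommRing A] (M : Type v) [AddCommGroup M] [Module A M]
    (B : Type w) [AddCommGroup B] [Module A B] :
    Module.End A M →ₗ[A] Module.End A (M →ₗ[A] B) :=
  (LinearMap.llcomp A M M B).flip

theorem precompEnd_injective (hM : Submodule.torsionBySet A M (I : Set A) = ⊥)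
    {B : Type w} [AddCommGroup B] [Module A B] {ι : B →ₗ[A] M} (hι : Function.Injective ι)
    (hI : I • (⊤ : Submodule A M) ≤ ι.range) : Function.Injective (precompEnd A M B) := by
  intro g h hgh
  refine linearMap_eq_of_smul_top_le_eqLocus hM (Submodule.smul_le.mpr fun a ha x _ => ?_)
  obtain ⟨f, hf⟩ := exists_comp_eq_smul_id hι hI ha
  have hfx : f (g x) = f (h x) := LinearMap.congr_fun (LinearMap.congr_fun hgh f) x
  calc g (a • x) = (ι ∘ₗ f) (g x) := by rw [hf, map_smul]; rfl
    _ = (ι ∘ₗ f) (h x) := congrArg ι hfx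
    _ = h (a • x) := by rw [hf, map_smul]; rfl

theorem precompEnd_surjective [Small.{v} A] (hM : ExtVanishesBelow I M 2)
    (he : I • (⊤ : Submodule A M) ≤ Submodule.span A {e})
    {B : Type w} [AddCommGroup B] [Module A B] {ι : B →ₗ[A] M} (hι : Function.Injective ι)
    (hI : I • (⊤ : Submodule A M) ≤ ι.range) : Function.Surjective (precompEnd A M B) := by
  intro T
  have htors := (hM.mono one_le_two).torsionBySet_eq_bot
  let κ : (M →ₗ[A] B) →ₗ[A] M := ι ∘ₗ LinearMap.applyₗ e
  have hκ : Function.Injective κ := fun f g hfg =>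
    (LinearMap.cancel_left hι).mp <|
      linearMap_eq_of_apply_eq (f := ι ∘ₗ f) (g := ι ∘ₗ g) htors he hfg
  have hIκ : I • (⊤ : Submodule A M) ≤ κ.range := by
    refine Submodule.smul_le.mpr fun a ha x _ => ?_
    obtain ⟨f, hf⟩ := exists_comp_eq_smul_id hι hI ha
    obtain ⟨g, rfl⟩ := (bijective_end_apply hM he).2 x
    exact ⟨f ∘ₗ g, LinearMap.congr_fun hf (g e)⟩
  obtain ⟨h, hh⟩ := hM.exists_extend hκ hIκ (κ ∘ₗ T)
  refine ⟨h, LinearMap.ext fun f => hκ ?_⟩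
  calc κ (f ∘ₗ h) = (ι ∘ₗ f) (h e) := rfl
    _ = h (κ f) := LinearMap.congr_fun (commute_end htors he (ι ∘ₗ f) h).eq e
    _ = κ (T f) := LinearMap.congr_fun hh f

theorem exists_linearEquiv_end_hom [Small.{v} A] (hM : ExtVanishesBelow I M 2)
    (he : I • (⊤ : Submodule A M) ≤ Submodule.span A {e})
    {B : Type w} [AddCommGroup B] [Module A B] {ι : B →ₗ[A] M} (hι : Function.Injective ι)
    (hI : I • (⊤ : Submodule A M) ≤ ι.range) :
    ∃ Φ : M ≃ₗ[A] Module.End A (M →ₗ[A] B), (∀ x y, Commute (Φ x) (Φ y)) ∧ Φ e = 1 := by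
  have htors := (hM.mono one_le_two).torsionBySet_eq_bot
  let ev := LinearEquiv.ofBijective _ (bijective_end_apply hM he)
  let E := LinearEquiv.ofBijective _
    ⟨precompEnd_injective htors hι hI, precompEnd_surjective hM he hι hI⟩
  have hev : ev.symm e = 1 := ev.symm_apply_eq.mpr rfl
  refine ⟨ev.symm ≪≫ₗ E, fun x y => ?_, ?_⟩
  · exact LinearMap.ext fun f => congrArg f.comp (commute_end htors he (ev.symm y) (ev.symm x)).eq
  · rw [LinearEquiv.trans_apply, hev]
    rfl

end CyclicUpToTorsion

section MaximalMinors

variable {A : Type} [CommRing A] {J : Type} [Fintype J] [DecidableEq J]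

theorem maxMinors_smul_top_le_range_mulVecLin {m : ℕ} (M : Matrix (Fin m) J A) :
    maxMinors A M • (⊤ : Submodule A (Fin m → A)) ≤ M.mulVecLin.range := by
  suffices h : maxMinors A M ≤ M.mulVecLin.range.colon Set.univ from
    Submodule.smul_le.mpr fun a ha w _ => Submodule.mem_colon.mp (h ha) w trivial
  refine Ideal.span_le.mpr ?_
  rintro _ ⟨c, -, rfl⟩
  refine Submodule.mem_colon.mpr fun w _ => ?_
  have hcols : (M.submatrix id c).mulVecLin.range ≤ M.mulVecLin.range := by
    rw [Matrix.range_mulVecLin, Matrix.range_mulVecLin]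
    exact Submodule.span_mono (Set.range_comp_subset_range c M.col)
  rw [← Matrix.mulVec_cramer]
  exact hcols ⟨_, rfl⟩

theorem maxMinors_smul_top_le_span {n : ℕ} {R : Type v} [AddCommGroup R] [Module A R]
    {φ : Matrix (Fin (n + 1)) J A} {p : (Fin (n + 1) → A) →ₗ[A] R} (hp : Function.Surjective p)
    (hφ : p ∘ₗ φ.mulVecLin = 0) :
    maxMinors A (φ.submatrix Fin.succ id) • (⊤ : Submodule A R) ≤
      Submodule.span A {p (Pi.single 0 1)} := by
  refine Submodule.smul_le.mpr fun a ha r _ => ?_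
  obtain ⟨w, rfl⟩ := hp r
  obtain ⟨v, hv⟩ : ∃ v, φ.submatrix Fin.succ id *ᵥ v = a • Fin.tail w :=
    maxMinors_smul_top_le_range_mulVecLin _ (Submodule.smul_mem_smul ha Submodule.mem_top)
  have hsplit : a • w = φ *ᵥ v + (a * w 0 - (φ *ᵥ v) 0) • Pi.single 0 1 := by
    ext i
    cases i using Fin.cases with
    | zero => simp
    | succ i => exact (congrFun hv i).symm.trans (by simp [Matrix.mulVec, dotProduct])
  rw [← map_smul, hsplit, map_add, map_smul, show p (φ *ᵥ v) = 0 from LinearMap.congr_fun hφ v,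
    zero_add]
  exact Submodule.smul_mem _ _ (Submodule.mem_span_singleton_self _)

end MaximalMinors

theorem ring_structure_from_heartsuit_general {A : Type} [CommRing A]
    {R : Type} [AddCommGroup R] [Module A R] {n₀ n₁ n₂ : ℕ}
    {φ : Matrix (Fin (n₀ + 1)) (Fin n₁) A} {ψ : Matrix (Fin n₁) (Fin n₂) A}
    {p : (Fin (n₀ + 1) → A) →ₗ[A] R} (hres : IsFreeRes₂ A φ ψ p)
    (hheart : depthGE A (maxMinors A (φ.submatrix Fin.succ id)) A 4) :
    ∃ e : R ≃ₗ[A]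
        ((R →ₗ[A] (A ⧸ Module.annihilator A R)) →ₗ[A]
          (R →ₗ[A] (A ⧸ Module.annihilator A R))),
      (∀ x y : R, (e x).comp (e y) = (e y).comp (e x)) ∧
      e (p (Pi.single 0 1)) = LinearMap.id := by
  obtain ⟨hp, hφ, hψ, hψ₀⟩ := hres
  obtain ⟨rs, hlen, hmem, hreg⟩ := hheart
  have hexact : Function.Exact φ.mulVecLin p := LinearMap.exact_iff.mpr hφ
  have hfree (n : ℕ) : ExtVanishesBelow (maxMinors A (φ.submatrix Fin.succ id)) (Fin n → A) 4 :=
    hlen ▸ .of_isWeaklyRegular_of_flat hmem hreg.toIsWeaklyRegular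
  have hR : ExtVanishesBelow (maxMinors A (φ.submatrix Fin.succ id)) R 2 :=
    .of_resolution (LinearMap.ker_eq_bot.mp hψ₀) (LinearMap.exact_iff.mpr hψ) hexact hp (hfree _)
      ((hfree _).mono (by norm_num)) ((hfree _).mono (by norm_num))
  have he := maxMinors_smul_top_le_span hp hexact.linearMap_comp_eq_zero
  obtain ⟨ι, hι, hrange⟩ :=
    exists_quotient_annihilator_embedding (hR.mono one_le_two).torsionBySet_eq_bot he
  exact exists_linearEquiv_end_hom hR he hι (he.trans hrange.ge)

/-- **Theorem 1.1.**  Let `A` be a Cohen-Macaulay Noetherian local ring and `R` a finite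
`A`-module with a minimal free resolution `0 → F₂ →ψ F₁ →φ F₀ →p R → 0`.  Let `φ'` be `φ`
with its first row erased and `I'` its ideal of maximal minors.  If `depth(Ann_A R, A) = 2`
and `depth(I', A) ≥ 4`, then, with `A_Y := A ⧸ Ann_A R` and `C := Hom_{A_Y}(R, A_Y)`
(`A`-linear and `A_Y`-linear maps coincide since everything is killed by `Ann_A R`),
there is an (`A_Y`-linear) isomorphism `R ≃ Hom_{A_Y}(C, C)` under which composition of
endomorphisms of `C` is a commutative multiplication on `R` whose identity element is the
image under `p` of the generator of `F₀` corresponding to the first row of `φ`. -/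
theorem ring_structure_from_heartsuit
    (A : Type) [CommRing A] [IsLocalRing A] [IsNoetherianRing A] (hCM : IsCMLocalRing A)
    (R : Type) [AddCommGroup R] [Module A R] [Module.Finite A R]
    (n₀ n₁ n₂ : ℕ)
    (φ : Matrix (Fin (n₀ + 1)) (Fin n₁) A) (ψ : Matrix (Fin n₁) (Fin n₂) A)
    (p : (Fin (n₀ + 1) → A) →ₗ[A] R)
    (hres : IsFreeRes₂ A φ ψ p)
    (hmin : (∀ i j, φ i j ∈ maximalIdeal A) ∧ ∀ i j, ψ i j ∈ maximalIdeal A)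
    (hdepthAnn : depthEq A (Module.annihilator A R) A 2)
    (hheart : depthGE A (maxMinors A (φ.submatrix Fin.succ id)) A 4) :
    ∃ e : R ≃ₗ[A]
        ((R →ₗ[A] (A ⧸ Module.annihilator A R)) →ₗ[A]
          (R →ₗ[A] (A ⧸ Module.annihilator A R))),
      (∀ x y : R, (e x).comp (e y) = (e y).comp (e x)) ∧
      e (p (Pi.single 0 1)) = LinearMap.id := by
  exact ring_structure_from_heartsuit_general hres hheart
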